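/- Let N ≥ 2 be an even integer and let f be a discrete function with f̂_0 = f̂_{N/2} = 0. Then the discrete Hilbert transform satisfies: (i) (H_h f)̂_k = −i·sgn(k)·f̂_k for every k ∈ {−N/2+1, …, N/2}; (ii) H_h(H_h f) = −f; and consequently ‖H_h f‖_{l²} = ‖f‖_{l²}. -/

import Mathlib

open scoped BigOperators
open Finset

noncomputable section

/-- Grid spacing `h = 2π/N`. -/
def hgrid (N : ℤ) : ℝ := 2 * Real.pi / N

/-- Grid points `α_j = j h`. -/
def gridPt (N : ℤ) (j : ℤ) : ℝ := j * hgrid N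

/-- Index set `{-N/2+1, …, N/2}`. -/
def idxs (N : ℤ) : Finset ℤ := Finset.Icc (-(N / 2) + 1) (N / 2)

/-- Discrete Fourier coefficient `f̂_k`. -/
def dft (N : ℤ) (f : ℤ → ℂ) (k : ℤ) : ℂ :=
  (N : ℂ)⁻¹ * ∑ j ∈ idxs N, f j * Complex.exp (-(Complex.I * (k : ℂ) * (gridPt N j : ℂ)))

/-- Reconstruction of a discrete function from Fourier coefficients. -/
def idft (N : ℤ) (c : ℤ → ℂ) (j : ℤ) : ℂ :=
  ∑ k ∈ idxs N, c k * Complex.exp (Complex.I * (k : ℂ) * (gridPt N j : ℂ))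

/-- The pseudo-spectral derivative `S_h`. -/
def Sh (N : ℤ) (f : ℤ → ℂ) : ℤ → ℂ :=
  idft N fun k => if k = N / 2 then 0 else Complex.I * (k : ℂ) * dft N f k

/-- The pseudo-spectral antiderivative `S_h⁻¹`. -/
def Shinv (N : ℤ) (f : ℤ → ℂ) : ℤ → ℂ :=
  idft N fun k => if k = 0 then 0 else dft N f k / (Complex.I * (k : ℂ))

/-- The filtered discrete function `f^p`. -/
def filterP (N : ℤ) (ρ : ℝ → ℝ) (f : ℤ → ℂ) : ℤ → ℂ :=
  idft N fun k => (ρ (gridPt N k) : ℂ) * dft N f k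

/-- The filtered derivative `D_h`. -/
def Dh (N : ℤ) (ρ : ℝ → ℝ) (f : ℤ → ℂ) : ℤ → ℂ :=
  idft N fun k => Complex.I * (k : ℂ) * (ρ (gridPt N k) : ℂ) * dft N f k

/-- Discrete `l²` norm. -/
def l2norm (N : ℤ) (f : ℤ → ℂ) : ℝ :=
  Real.sqrt (hgrid N * ∑ j ∈ idxs N, ‖f j‖ ^ 2)

/-- Discrete Hilbert transform `H_h`. -/
def Hh (N : ℤ) (f : ℤ → ℂ) (i : ℤ) : ℂ :=
  ((hgrid N / Real.pi : ℝ) : ℂ) *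
    ∑ j ∈ (idxs N).filter (fun j => Odd (j - i)),
      f j * (Real.cot ((gridPt N i - gridPt N j) / 2) : ℂ)

/-- Discrete inner product `(f,g)_h`. -/
def dip (N : ℤ) (f g : ℤ → ℂ) : ℂ :=
  (hgrid N : ℂ) * ∑ j ∈ idxs N, (starRingEnd ℂ) (f j) * g j

/-- Discrete mean `⟨f⟩_h`. -/
def dmean (N : ℤ) (f : ℤ → ℂ) : ℂ :=
  (N : ℂ)⁻¹ * ∑ j ∈ idxs N, f j

/-- The discrete function of samples of a periodic function. -/
def samples (N : ℤ) (f : ℝ → ℂ) : ℤ → ℂ := fun j => f (gridPt N j)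

/-- Fourier coefficient of a `2π`-periodic function. -/
def fourierCoeffP (f : ℝ → ℂ) (k : ℤ) : ℂ :=
  ((2 * Real.pi)⁻¹ : ℝ) * ∫ α in (-Real.pi)..Real.pi, f α * Complex.exp (-(Complex.I * (k : ℂ) * (α : ℂ)))

/-- Sobolev norm `‖f‖_s`. -/
def sobolevNorm (s : ℕ) (f : ℝ → ℂ) : ℝ :=
  Real.sqrt (∑' k : ℤ, (1 + (k : ℝ) ^ 2) ^ s * ‖fourierCoeffP f k‖ ^ 2)

/-- A filter (cutoff) function for numerical filtering. -/
structure IsFilter (ρ : ℝ → ℝ) : Prop where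
  even : ∀ x, ρ (-x) = ρ x
  nonneg : ∀ x, 0 ≤ ρ x
  smooth : ∃ r : ℕ, 2 < r ∧ ContDiff ℝ r ρ
  zero_at_pi : ρ Real.pi = 0
  zero_at_neg_pi : ρ (-Real.pi) = 0
  deriv_zero_at_pi : deriv ρ Real.pi = 0
  deriv_zero_at_neg_pi : deriv ρ (-Real.pi) = 0
  one_near_zero : ∃ μ : ℝ, 0 < μ ∧ μ < 1 ∧ ∀ x : ℝ, |x| ≤ μ * Real.pi → ρ x = 1

/-!
On the grid, `f ↦ idft N (c * dft N f)` is convolution with `N⁻¹ idft N c`. For the multiplier `c`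
equal to `-i sgn k` away from the Nyquist frequency `N/2` and to `0` there, `idft N c` has a closed
form: with `z = e^{imh}`, the sum of `sgn k * z^k` over `|k| < N/2` telescopes after multiplication
by `z - 1`, and `z^{N/2} = (-1)^m` gives `2 cot (mh/2)` for odd `m` and `0` for even `m`. This is
the kernel of `H_h`, which is therefore the Fourier multiplier `c`. Since `c k = ±i` at every
frequency other than `0` and `N/2`, where `f̂` vanishes, `H_h² f = -f`, and Parseval's identity
gives the isometry.
-/

/-- The root of unity `e^{ih}`, whose powers are the values of all discrete exponentials. -/
def gridRoot (N : ℤ) : ℂ := Complex.exp (Complex.I * (hgrid N : ℂ))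

/-- The Fourier multiplier of `H_h`: it is `-i sgn k`, except that it vanishes at the Nyquist
frequency `k = N/2`, because `N/2` and `-N/2` are the same frequency on the grid. -/
def hilbertMultiplier (N k : ℤ) : ℂ := if k = N / 2 then 0 else -Complex.I * (Int.sign k : ℂ)

lemma sum_Icc_neg_eq_zero_of_odd {G : Type*} [AddCommGroup G] [IsAddTorsionFree G] {g : ℤ → G}
    (hg : g.Odd) (a : ℤ) : ∑ k ∈ Icc (-a) a, g k = 0 := by
  refine hg.finsetSum_eq_zero ?_
  ext k
  simp only [mem_map_equiv, Equiv.neg_symm, Equiv.neg_apply, mem_Icc]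
  omega

section GeometricSums

variable {K : Type*} [Field K] {z : K}

lemma sub_one_mul_sum_Ico_zpow (hz : z ≠ 0) {a b : ℤ} (hab : a ≤ b) :
    (z - 1) * ∑ k ∈ Ico a b, z ^ k = z ^ b - z ^ a := by
  induction b, hab using Int.leInduction with
  | base => simp
  | succ b hab ih =>
    rw [← sum_Ico_add_eq_sum_Ico_add_one hab, mul_add, ih, zpow_add_one₀ hz]
    ring

lemma sub_one_mul_sum_Icc_sign_mul_zpow (hz : z ≠ 0) (n : ℕ) :
    (z - 1) * ∑ k ∈ Icc (-n : ℤ) n, (Int.sign k : K) * z ^ k =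
      z ^ (n + 1 : ℤ) + z ^ (-n : ℤ) - z - 1 := by
  induction n with
  | zero => simp
  | succ n ih =>
    have hpos : Int.sign (n + 1) = 1 := Int.sign_eq_one_of_pos (by omega)
    have hnext : z ^ (-n : ℤ) = z ^ (-(n + 1) : ℤ) * z := by
      rw [← zpow_add_one₀ hz, neg_add, neg_add_cancel_right]
    push_cast
    rw [sum_Icc_succ_eq_add_endpoints, Int.sign_neg, hpos, mul_add, ih, hnext,
      zpow_add_one₀ hz (n + 1)]
    push_cast
    ring

lemma sub_one_mul_sum_Icc_sign_mul_zpow_eq_mul {n : ℕ} {ε : K} (hε : ε * ε = 1)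
    (hzε : z ^ (n + 1 : ℤ) = ε) :
    (z - 1) * ∑ k ∈ Icc (-n : ℤ) n, (Int.sign k : K) * z ^ k = (ε - 1) * (z + 1) := by
  have hz : z ≠ 0 := by
    rintro rfl
    rw [zero_zpow _ (by omega)] at hzε
    simp [← hzε] at hε
  have hneg : z ^ (-n : ℤ) = ε * z := by
    have hinv : z ^ (-(n + 1) : ℤ) = ε := by rw [zpow_neg, hzε, inv_eq_of_mul_eq_one_left hε]
    rw [← hinv, ← zpow_add_one₀ hz, neg_add, neg_add_cancel_right]
  rw [sub_one_mul_sum_Icc_sign_mul_zpow hz, hzε, hneg]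
  ring

lemma sum_Icc_sign_mul_zpow_of_zpow_eq_one {n : ℕ} (hz : z ^ (n + 1 : ℤ) = 1) :
    ∑ k ∈ Icc (-n : ℤ) n, (Int.sign k : K) * z ^ k = 0 := by
  rcases eq_or_ne z 1 with rfl | hne
  · simp only [one_zpow, mul_one]
    rw [← Int.cast_sum, sum_Icc_neg_eq_zero_of_odd Int.sign_neg, Int.cast_zero]
  · refine (mul_eq_zero.mp ?_).resolve_left (sub_ne_zero.mpr hne)
    rw [sub_one_mul_sum_Icc_sign_mul_zpow_eq_mul (one_mul 1) hz, sub_self, zero_mul]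

lemma sum_Icc_sign_mul_zpow_of_zpow_eq_neg_one [NeZero (2 : K)] {n : ℕ}
    (hz : z ^ (n + 1 : ℤ) = -1) :
    ∑ k ∈ Icc (-n : ℤ) n, (Int.sign k : K) * z ^ k = -2 * ((z + 1) / (z - 1)) := by
  have hne : z - 1 ≠ 0 := by
    refine sub_ne_zero.mpr ?_
    rintro rfl
    refine two_ne_zero (α := K) ?_
    rw [← one_add_one_eq_two, ← neg_eq_iff_add_eq_zero, ← hz, one_zpow]
  rw [← mul_right_inj' hne, sub_one_mul_sum_Icc_sign_mul_zpow_eq_mul (by ring) hz]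
  field_simp
  ring

end GeometricSums

section GridRoot

variable {N : ℤ}

lemma gridRoot_ne_zero : gridRoot N ≠ 0 := Complex.exp_ne_zero _

lemma exp_mul_gridPt (k j : ℤ) :
    Complex.exp (Complex.I * (k : ℂ) * (gridPt N j : ℂ)) = gridRoot N ^ (k * j) := by
  rw [gridRoot, ← Complex.exp_int_mul, gridPt]
  push_cast
  ring_nf

lemma exp_neg_mul_gridPt (k j : ℤ) :
    Complex.exp (-(Complex.I * (k : ℂ) * (gridPt N j : ℂ))) = gridRoot N ^ (-(k * j)) := by
  rw [Complex.exp_neg, exp_mul_gridPt, zpow_neg]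

lemma conj_gridRoot_zpow (a : ℤ) : starRingEnd ℂ (gridRoot N ^ a) = gridRoot N ^ (-a) := by
  rw [map_zpow₀, gridRoot, ← Complex.exp_conj, zpow_neg, ← inv_zpow, ← Complex.exp_neg]
  simp

lemma gridRoot_zpow_eq_one_iff (hN : N ≠ 0) (a : ℤ) : gridRoot N ^ a = 1 ↔ N ∣ a := by
  obtain ⟨n, rfl | rfl⟩ := N.eq_nat_or_neg
  · have hroot := Complex.isPrimitiveRoot_exp n (by omega)
    rw [← hroot.zpow_eq_one_iff_dvd, gridRoot, hgrid]
    push_cast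
    ring_nf
  · have hroot := Complex.isPrimitiveRoot_exp n (by omega)
    rw [neg_dvd, ← hroot.inv.zpow_eq_one_iff_dvd, ← Complex.exp_neg, gridRoot, hgrid]
    push_cast
    ring_nf

lemma gridRoot_zpow_half (hN : N ≠ 0) (hNe : Even N) : gridRoot N ^ (N / 2) = -1 := by
  have hN' : (N : ℂ) ≠ 0 := Int.cast_ne_zero.mpr hN
  rw [gridRoot, ← Complex.exp_int_mul, hgrid, Int.cast_div hNe.two_dvd two_ne_zero,
    ← Complex.exp_pi_mul_I]
  push_cast
  field_simp

/-- At a pole of the cotangent both sides are the junk value `0`. -/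
lemma ofReal_cot_gridPt_half (m : ℤ) :
    (Real.cot (gridPt N m / 2) : ℂ) =
      Complex.I * ((gridRoot N ^ m + 1) / (gridRoot N ^ m - 1)) := by
  have hexp : Complex.exp (2 * Complex.I * ((gridPt N m / 2 : ℝ) : ℂ)) = gridRoot N ^ m := by
    rw [← one_mul m, ← exp_mul_gridPt, one_mul]
    push_cast
    ring_nf
  rw [Complex.ofReal_cot, Complex.cot_eq_exp_ratio, hexp, ← neg_sub, mul_neg, div_neg,
    div_mul_eq_div_div_swap, Complex.div_I, neg_neg, mul_comm]

end GridRoot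

section DiscreteFourier

variable {N : ℤ}

lemma dft_eq_sum_zpow (f : ℤ → ℂ) (k : ℤ) :
    dft N f k = (N : ℂ)⁻¹ * ∑ j ∈ idxs N, f j * gridRoot N ^ (-(k * j)) := by
  simp only [dft, exp_neg_mul_gridPt]

lemma idft_eq_sum_zpow (c : ℤ → ℂ) (j : ℤ) :
    idft N c j = ∑ k ∈ idxs N, c k * gridRoot N ^ (k * j) := by
  simp only [idft, exp_mul_gridPt]

lemma idft_mul_dft (c f : ℤ → ℂ) (i : ℤ) :
    idft N (fun k => c k * dft N f k) i = (N : ℂ)⁻¹ * ∑ j ∈ idxs N, f j * idft N c (i - j) := by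
  simp only [idft_eq_sum_zpow, dft_eq_sum_zpow, mul_sum, sum_mul]
  rw [sum_comm]
  refine sum_congr rfl fun j _ => sum_congr rfl fun k _ => ?_
  rw [mul_sub, sub_eq_add_neg, zpow_add₀ gridRoot_ne_zero]
  ring

lemma idxs_eq_Ico (hNe : Even N) : idxs N = Ico (-(N / 2) + 1) (-(N / 2) + 1 + N) := by
  obtain ⟨M, rfl⟩ := hNe
  ext k
  simp only [idxs, mem_Icc, mem_Ico]
  omega

lemma idft_one (hN : 0 < N) (hNe : Even N) (m : ℤ) :
    idft N (fun _ => 1) m = if N ∣ m then (N : ℂ) else 0 := by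
  simp only [idft_eq_sum_zpow, one_mul, mul_comm _ m, zpow_mul, idxs_eq_Ico hNe]
  split_ifs with hdvd
  · have hcard : ((Ico (-(N / 2) + 1) (-(N / 2) + 1 + N)).card : ℤ) = N := by
      rw [Int.card_Ico, add_sub_cancel_left, Int.toNat_of_nonneg hN.le]
    simp only [(gridRoot_zpow_eq_one_iff hN.ne' m).mpr hdvd, one_zpow, sum_const, nsmul_one]
    exact_mod_cast hcard
  · have hz : gridRoot N ^ m ≠ 0 := zpow_ne_zero m gridRoot_ne_zero
    have hz1 : gridRoot N ^ m - 1 ≠ 0 :=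
      sub_ne_zero.mpr (mt (gridRoot_zpow_eq_one_iff hN.ne' m).mp hdvd)
    have hperiod : (gridRoot N ^ m) ^ N = 1 := by
      rw [← zpow_mul, gridRoot_zpow_eq_one_iff hN.ne']
      exact dvd_mul_left N m
    refine (mul_eq_zero.mp ?_).resolve_left hz1
    rw [sub_one_mul_sum_Ico_zpow hz (by omega), zpow_add₀ hz _ N, hperiod, mul_one, sub_self]

lemma dvd_sub_iff_of_mem_idxs {k l : ℤ} (hk : k ∈ idxs N) (hl : l ∈ idxs N) :
    N ∣ k - l ↔ k = l := by
  rw [idxs, mem_Icc] at hk hl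
  refine ⟨fun h => sub_eq_zero.mp (Int.eq_zero_of_abs_lt_dvd h ?_), fun h => by simp [h]⟩
  rw [abs_lt]
  omega

lemma idft_dft (hN : 0 < N) (hNe : Even N) (f : ℤ → ℂ) {i : ℤ} (hi : i ∈ idxs N) :
    idft N (dft N f) i = f i := by
  have hN' : (N : ℂ) ≠ 0 := Int.cast_ne_zero.mpr hN.ne'
  calc idft N (dft N f) i
      = (N : ℂ)⁻¹ * ∑ j ∈ idxs N, f j * idft N (fun _ => 1) (i - j) := by
        simpa only [one_mul] using idft_mul_dft (fun _ => 1) f i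
    _ = (N : ℂ)⁻¹ * ∑ j ∈ idxs N, if i = j then f j * N else 0 := by
        congr 1
        refine sum_congr rfl fun j hj => ?_
        simp only [idft_one hN hNe, dvd_sub_iff_of_mem_idxs hi hj, mul_ite, mul_zero]
    _ = f i := by
        rw [sum_ite_eq, if_pos hi]
        field_simp

lemma dft_idft (hN : 0 < N) (hNe : Even N) (c : ℤ → ℂ) {k : ℤ} (hk : k ∈ idxs N) :
    dft N (idft N c) k = c k := by
  have hN' : (N : ℂ) ≠ 0 := Int.cast_ne_zero.mpr hN.ne'
  calc dft N (idft N c) k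
      = (N : ℂ)⁻¹ * ∑ l ∈ idxs N, c l * idft N (fun _ => 1) (l - k) := by
        simp only [dft_eq_sum_zpow, idft_eq_sum_zpow, mul_sum, sum_mul]
        rw [sum_comm]
        refine sum_congr rfl fun l _ => sum_congr rfl fun j _ => ?_
        rw [mul_sub, sub_eq_add_neg, zpow_add₀ gridRoot_ne_zero]
        ring_nf
    _ = (N : ℂ)⁻¹ * ∑ l ∈ idxs N, if l = k then c l * N else 0 := by
        congr 1
        refine sum_congr rfl fun l hl => ?_
        simp only [idft_one hN hNe, dvd_sub_iff_of_mem_idxs hl hk, mul_ite, mul_zero]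
    _ = c k := by
        rw [sum_ite_eq', if_pos hk]
        field_simp

lemma sum_idft_mul_conj (hN : N ≠ 0) (c f : ℤ → ℂ) :
    ∑ j ∈ idxs N, f j * starRingEnd ℂ (idft N c j) =
      N * ∑ k ∈ idxs N, dft N f k * starRingEnd ℂ (c k) := by
  have hN' : (N : ℂ) ≠ 0 := Int.cast_ne_zero.mpr hN
  have hdft (k : ℤ) : N * dft N f k = ∑ j ∈ idxs N, f j * gridRoot N ^ (-(k * j)) := by
    rw [dft_eq_sum_zpow, mul_inv_cancel_left₀ hN']
  simp only [mul_sum, ← mul_assoc, hdft, idft_eq_sum_zpow, map_sum, map_mul, conj_gridRoot_zpow,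
    sum_mul]
  rw [sum_comm]
  exact sum_congr rfl fun k _ => sum_congr rfl fun j _ => by ring

lemma sum_norm_sq_eq_mul_sum_norm_sq_dft (hN : 0 < N) (hNe : Even N) (f : ℤ → ℂ) :
    ∑ j ∈ idxs N, ‖f j‖ ^ 2 = N * ∑ k ∈ idxs N, ‖dft N f k‖ ^ 2 := by
  rw [← Complex.ofReal_inj]
  push_cast
  simp only [← Complex.mul_conj']
  rw [← sum_idft_mul_conj hN.ne' (dft N f) f]
  exact sum_congr rfl fun j hj => by rw [idft_dft hN hNe f hj]

lemma l2norm_congr_of_norm_dft_eq (hN : 0 < N) (hNe : Even N) {f g : ℤ → ℂ}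
    (h : ∀ k ∈ idxs N, ‖dft N f k‖ = ‖dft N g k‖) : l2norm N f = l2norm N g := by
  rw [l2norm, l2norm, sum_norm_sq_eq_mul_sum_norm_sq_dft hN hNe f,
    sum_norm_sq_eq_mul_sum_norm_sq_dft hN hNe g, sum_congr rfl fun k hk => by rw [h k hk]]

end DiscreteFourier

section HilbertTransform

variable {N : ℤ}

lemma idft_hilbertMultiplier_eq_sum_Icc (n : ℕ) (m : ℤ) :
    idft (2 * (n + 1)) (hilbertMultiplier (2 * (n + 1))) m =
      -Complex.I * ∑ k ∈ Icc (-n : ℤ) n, (Int.sign k : ℂ) * (gridRoot (2 * (n + 1)) ^ m) ^ k := by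
  have hhalf : 2 * (n + 1 : ℤ) / 2 = n + 1 := by omega
  have hidxs : idxs (2 * (n + 1)) = insert (n + 1 : ℤ) (Icc (-n : ℤ) n) := by
    ext k
    simp only [idxs, mem_insert, mem_Icc]
    omega
  rw [idft_eq_sum_zpow, hidxs, sum_insert (by simp), mul_sum, hilbertMultiplier, if_pos hhalf.symm,
    zero_mul, zero_add]
  refine sum_congr rfl fun k hk => ?_
  rw [mem_Icc] at hk
  rw [hilbertMultiplier, if_neg (by omega), mul_assoc, mul_comm k m, zpow_mul]

lemma idft_hilbertMultiplier (hN : 0 < N) (hNe : Even N) (m : ℤ) :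
    idft N (hilbertMultiplier N) m = if Odd m then 2 * (Real.cot (gridPt N m / 2) : ℂ) else 0 := by
  have hNyquist : (gridRoot N ^ m) ^ (N / 2) = (-1) ^ m := by
    rw [← zpow_mul, mul_comm, zpow_mul, gridRoot_zpow_half hN.ne' hNe]
  obtain ⟨n, rfl⟩ : ∃ n : ℕ, N = 2 * (n + 1) := by
    obtain ⟨M, rfl⟩ := hNe
    exact ⟨(M - 1).toNat, by omega⟩
  rw [show 2 * (n + 1 : ℤ) / 2 = n + 1 by omega] at hNyquist
  rw [idft_hilbertMultiplier_eq_sum_Icc]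
  split_ifs with hm
  · rw [hm.neg_one_zpow] at hNyquist
    rw [sum_Icc_sign_mul_zpow_of_zpow_eq_neg_one hNyquist, ofReal_cot_gridPt_half]
    ring
  · rw [(Int.not_odd_iff_even.mp hm).neg_one_zpow] at hNyquist
    rw [sum_Icc_sign_mul_zpow_of_zpow_eq_one hNyquist, mul_zero]

lemma Hh_eq_idft_mul_dft (hN : 0 < N) (hNe : Even N) (f : ℤ → ℂ) :
    Hh N f = idft N fun k => hilbertMultiplier N k * dft N f k := by
  funext i
  have hscale : ((hgrid N / Real.pi : ℝ) : ℂ) = (N : ℂ)⁻¹ * 2 := by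
    rw [hgrid]
    push_cast
    field_simp
  rw [idft_mul_dft, Hh, hscale, mul_assoc, mul_sum, sum_filter]
  congr 1
  refine sum_congr rfl fun j _ => ?_
  have hdiff : gridPt N i - gridPt N j = gridPt N (i - j) := by
    simp only [gridPt, Int.cast_sub, sub_mul]
  rw [idft_hilbertMultiplier hN hNe, hdiff, mul_ite, mul_zero, mul_left_comm]
  simp only [← neg_sub i j, odd_neg]

lemma dft_Hh (hN : 0 < N) (hNe : Even N) (f : ℤ → ℂ) {k : ℤ} (hk : k ∈ idxs N) :
    dft N (Hh N f) k = hilbertMultiplier N k * dft N f k := by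
  rw [Hh_eq_idft_mul_dft hN hNe, dft_idft hN hNe _ hk]

lemma hilbertMultiplier_eq_I_or_neg_I {k : ℤ} (hk0 : k ≠ 0) (hkN : k ≠ N / 2) :
    hilbertMultiplier N k = Complex.I ∨ hilbertMultiplier N k = -Complex.I := by
  rw [hilbertMultiplier, if_neg hkN]
  rcases hk0.lt_or_gt with hneg | hpos
  · exact .inl (by simp [Int.sign_eq_neg_one_of_neg hneg])
  · exact .inr (by simp [Int.sign_eq_one_of_pos hpos])

end HilbertTransform

/-- Lemma 8.3, parts (i), (ii): spectral properties of the discrete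
Hilbert transform, and the resulting `l²`-isometry. -/
theorem discrete_hilbert_transform_properties (N : ℤ) (hN : 2 ≤ N) (hNe : Even N)
    (f : ℤ → ℂ) (h0 : dft N f 0 = 0) (hN2 : dft N f (N / 2) = 0) :
    (∀ k ∈ idxs N, dft N (Hh N f) k = -Complex.I * (Int.sign k : ℂ) * dft N f k) ∧
    (∀ i ∈ idxs N, Hh N (Hh N f) i = -f i) ∧
    l2norm N (Hh N f) = l2norm N f := by
  have hNpos : 0 < N := by omega
  have hmode : ∀ k, dft N f k = 0 ∨
      hilbertMultiplier N k = Complex.I ∨ hilbertMultiplier N k = -Complex.I := by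
    intro k
    by_cases hk : k = 0 ∨ k = N / 2
    · exact .inl (by rcases hk with rfl | rfl <;> assumption)
    · exact .inr (hilbertMultiplier_eq_I_or_neg_I (mt .inl hk) (mt .inr hk))
  refine ⟨fun k hk => ?_, fun i hi => ?_, l2norm_congr_of_norm_dft_eq hNpos hNe fun k hk => ?_⟩
  · rcases eq_or_ne k (N / 2) with rfl | hkN
    · rw [dft_Hh hNpos hNe f hk, hN2, mul_zero, mul_zero]
    · rw [dft_Hh hNpos hNe f hk, hilbertMultiplier, if_neg hkN]
  · rw [Hh_eq_idft_mul_dft hNpos hNe, ← idft_dft hNpos hNe f hi, idft, idft, ← sum_neg_distrib]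
    refine sum_congr rfl fun k hk => ?_
    rw [dft_Hh hNpos hNe f hk, ← neg_mul]
    rcases hmode k with h | h | h <;> simp [h, ← mul_assoc]
  · rw [dft_Hh hNpos hNe f hk, norm_mul]
    rcases hmode k with h | h | h <;> simp [h]

end
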